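/- For a double-integrator robot with speed bound v_max > 0 and acceleration bound u_max > 0, starting from any configuration g = (p, v) ∈ ℝ² × ℝ² with ‖v‖ = v₀ satisfying 0 < v₀ ≤ v_max, the integral of the minimum travel time over the small-time reachable set satisfies liminf_{t→0⁺} (∫_{R_t(g)} τ_DI(g, q) dq) / t⁴ ≥ v₀ u_max / 12, where the integral is with respect to two-dimensional Lebesgue measure. -/

import Mathlib

open MeasureTheory Filter Topology Real

noncomputable section

/-- The plane `ℝ²` with the Euclidean norm. -/
abbrev Plane : Type := EuclideanSpace ℝ (Fin 2)

/-- A double-integrator (DI) trajectory with speed bound `vmax` and acceleration bound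
`umax`: a twice continuously differentiable curve in the plane whose velocity and
acceleration are bounded by `vmax` and `umax` respectively. -/
def IsDITraj (vmax umax : ℝ) (x : ℝ → Plane) : Prop :=
  ContDiff ℝ 2 x ∧ (∀ t, ‖deriv x t‖ ≤ vmax) ∧ (∀ t, ‖deriv (deriv x) t‖ ≤ umax)

/-- Minimum travel time of a DI robot from configuration `(p, v)` to the point `q`. -/
def tauDI (vmax umax : ℝ) (p v q : Plane) : ℝ :=
  sInf {T : ℝ | 0 ≤ T ∧ ∃ x : ℝ → Plane, IsDITraj vmax umax x ∧
    x 0 = p ∧ deriv x 0 = v ∧ x T = q}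

/-- Reachable set at time `t` of a DI robot starting at configuration `(p, v)`. -/
def reachDI (vmax umax : ℝ) (p v : Plane) (t : ℝ) : Set Plane :=
  {q | tauDI vmax umax p v q ≤ t}



open Set Metric in
/-- An arbitrary union of convex sets with nonempty interior is Lebesgue null-measurable. -/
theorem nullMeasurable_iUnion_convex {ι : Type*} (A : ι → Set Plane)
    (hconv : ∀ i, Convex ℝ (A i)) (hint : ∀ i, (interior (A i)).Nonempty) :
    NullMeasurableSet (⋃ i, A i) (volume : Measure Plane) := by
  set U : Set Plane := ⋃ i, interior (A i) with hU
  have hUo : IsOpen U := isOpen_iUnion fun i => isOpen_interior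
  have hsub : U ⊆ ⋃ i, A i := iUnion_mono fun i => interior_subset
  have hae := Besicovitch.ae_tendsto_measure_inter_div_of_measurableSet
    (volume : Measure Plane) hUo.measurableSet
  have hEq : U =ᵐ[(volume : Measure Plane)] ⋃ i, A i := by
    filter_upwards [hae] with q hq
    apply propext
    refine ⟨fun h => hsub h, fun h => ?_⟩
    by_contra hqU
    have hqU' : q ∉ U := hqU
    rw [indicator_of_notMem hqU'] at hq
    obtain ⟨i, hi⟩ := mem_iUnion.1 h
    obtain ⟨c, hc⟩ := hint i
    obtain ⟨ρ, hρ, hball⟩ := Metric.isOpen_iff.1 isOpen_interior c hc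
    set M := ‖c - q‖ + ρ with hM
    have hMpos : 0 < M := by positivity
    have hκ : (0 : ENNReal) < ENNReal.ofReal ((ρ / M) ^ Module.finrank ℝ Plane) := by
      rw [ENNReal.ofReal_pos]; positivity
    have h1 := hq.eventually (gt_mem_nhds hκ)
    have h2 : ∀ᶠ r in 𝓝[>] (0:ℝ), r ∈ Ioc 0 M := Ioc_mem_nhdsGT hMpos
    obtain ⟨r, hr1, hr0, hrM⟩ := (h1.and h2).exists
    rw [ENNReal.div_lt_iff (Or.inl (measure_closedBall_pos _ _ hr0).ne')
      (Or.inl measure_closedBall_lt_top.ne)] at hr1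
    have hsubset : ball (q + (r / M) • (c - q)) ((ρ / M) * r) ⊆ U ∩ closedBall q r := by
      intro y hy
      have hl0 : 0 < r / M := by positivity
      have hl1 : r / M ≤ 1 := (div_le_one hMpos).2 hrM
      have hy' : ‖y - q - (r / M) • (c - q)‖ < (ρ / M) * r := by
        rw [mem_ball_iff_norm] at hy
        rwa [sub_sub]
      constructor
      · have hz : q + (r / M)⁻¹ • (y - q) ∈ interior (A i) := by
          apply hball
          rw [mem_ball_iff_norm]
          have : q + (r / M)⁻¹ • (y - q) - c = (r / M)⁻¹ • (y - q - (r / M) • (c - q)) := by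
            rw [smul_sub _ (y - q), smul_smul, inv_mul_cancel₀ hl0.ne', one_smul]; abel
          rw [this, norm_smul, Real.norm_of_nonneg (by positivity)]
          calc (r / M)⁻¹ * _ < (r / M)⁻¹ * ((ρ / M) * r) := by gcongr
            _ = ρ := by field_simp
        refine mem_iUnion.2 ⟨i, ?_⟩
        have := (hconv i).add_smul_sub_mem_interior hi hz ⟨hl0, hl1⟩
        rwa [add_sub_cancel_left, smul_smul, mul_inv_cancel₀ hl0.ne', one_smul,
          add_sub_cancel] at this
      · rw [mem_closedBall_iff_norm]
        calc ‖y - q‖ = ‖(y - q - (r / M) • (c - q)) + (r / M) • (c - q)‖ := by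
              rw [sub_add_cancel]
          _ ≤ (ρ / M) * r + (r / M) * ‖c - q‖ := by
              refine (norm_add_le _ _).trans (add_le_add hy'.le ?_)
              rw [norm_smul, Real.norm_of_nonneg hl0.le]
          _ = r := by rw [hM]; field_simp; ring
    have h3 := measure_mono (μ := (volume : Measure Plane)) hsubset
    rw [Measure.addHaar_ball_mul _ _ (by positivity : 0 ≤ ρ / M)] at h3
    rw [Measure.addHaar_closedBall_eq_addHaar_ball, Measure.addHaar_ball_center] at hr1
    exact absurd (lt_of_le_of_lt h3 hr1) (lt_irrefl _)
  exact hUo.measurableSet.nullMeasurableSet.congr hEq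

/-- Points reachable at time exactly `T`. -/
def endDI (vmax umax : ℝ) (p v : Plane) (T : ℝ) : Set Plane :=
  {q | ∃ x : ℝ → Plane, IsDITraj vmax umax x ∧ x 0 = p ∧ deriv x 0 = v ∧ x T = q}

theorem endDI_convex (vmax umax : ℝ) (p v : Plane) (T : ℝ) :
    Convex ℝ (endDI vmax umax p v T) := by
  rintro _ ⟨x, ⟨hx, hx1, hx2⟩, hx0, hxv, rfl⟩ _ ⟨y, ⟨hy, hy1, hy2⟩, hy0, hyv, rfl⟩ a b ha hb hab
  have hdx : Differentiable ℝ x := hx.differentiable (by norm_num)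
  have hdy : Differentiable ℝ y := hy.differentiable (by norm_num)
  have hdx' : Differentiable ℝ (deriv x) :=
    ((contDiff_succ_iff_deriv (n := 1)).1 hx).2.2.differentiable (by norm_num)
  have hdy' : Differentiable ℝ (deriv y) :=
    ((contDiff_succ_iff_deriv (n := 1)).1 hy).2.2.differentiable (by norm_num)
  have hd : deriv (fun s => a • x s + b • y s) = fun s => a • deriv x s + b • deriv y s := by
    funext s
    exact (((hdx s).hasDerivAt.const_smul a).add ((hdy s).hasDerivAt.const_smul b)).deriv
  have hd2 : deriv (fun s => a • deriv x s + b • deriv y s) =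
      fun s => a • deriv (deriv x) s + b • deriv (deriv y) s := by
    funext s
    exact (((hdx' s).hasDerivAt.const_smul a).add ((hdy' s).hasDerivAt.const_smul b)).deriv
  have hn : ∀ (m : ℝ) (z w : Plane), ‖z‖ ≤ m → ‖w‖ ≤ m → ‖a • z + b • w‖ ≤ m := by
    intro m z w hz hw
    calc ‖a • z + b • w‖ ≤ a * ‖z‖ + b * ‖w‖ := by
          refine (norm_add_le _ _).trans ?_
          rw [norm_smul, norm_smul, Real.norm_of_nonneg ha, Real.norm_of_nonneg hb]
      _ ≤ a * m + b * m := by gcongr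
      _ = m := by rw [← add_mul, hab, one_mul]
  refine ⟨fun s => a • x s + b • y s, ⟨by fun_prop, ?_, ?_⟩, ?_, ?_, rfl⟩
  · intro t; rw [hd]; exact hn _ _ _ (hx1 t) (hy1 t)
  · intro t; rw [hd, hd2]; exact hn _ _ _ (hx2 t) (hy2 t)
  · simp only [hx0, hy0, ← add_smul, hab, one_smul]
  · rw [hd]; simp only [hxv, hyv, ← add_smul, hab, one_smul]

theorem arctan_lt_self_aux {x : ℝ} (hx : 0 < x) : Real.arctan x < x := by
  have := Real.lt_tan (Real.arctan_pos.2 hx) (Real.arctan_lt_pi_div_two x)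
  rwa [Real.tan_arctan] at this

/-- Velocity `φ v + (1 - φ) w` with `φ s = 1 / (1 + (k s)^2)`. -/
theorem endDI_blend (vmax umax : ℝ) (hvmax : 0 < vmax) (humax : 0 < umax)
    (p v w : Plane) (hv : ‖v‖ ≤ vmax) (hw : ‖w‖ ≤ vmax) (T k : ℝ)
    (hk : k = umax / (2 * vmax)) :
    p + (Real.arctan (k * T) / k) • v + (T - Real.arctan (k * T) / k) • w
      ∈ endDI vmax umax p v T := by
  have hk0 : 0 < k := by rw [hk]; positivity
  set x : ℝ → Plane := fun s =>
    p + (Real.arctan (k * s) / k) • v + (s - Real.arctan (k * s) / k) • w with hx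
  have hΦ : ∀ s, HasDerivAt (fun s => Real.arctan (k * s) / k) (1 / (1 + (k * s) ^ 2)) s := by
    intro s
    have := (((hasDerivAt_id s).const_mul k).arctan).div_const k
    convert! this using 1
    simp
    field_simp
  have hφ : ∀ s, HasDerivAt (fun s => 1 / (1 + (k * s) ^ 2))
      (-(2 * k * (k * s)) / (1 + (k * s) ^ 2) ^ 2) s := by
    intro s
    have h1 : HasDerivAt (fun s => 1 + (k * s) ^ 2) (2 * k * (k * s)) s := by
      have := (((hasDerivAt_id s).const_mul k).pow 2).const_add 1
      convert! this using 1
      simp; ring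
    have hne : 1 + (k * s) ^ 2 ≠ 0 := by positivity
    have := h1.inv hne
    simpa [one_div] using! this
  have hd : deriv x = fun s => (1 / (1 + (k * s) ^ 2)) • v + (1 - 1 / (1 + (k * s) ^ 2)) • w := by
    funext s
    have := (((hΦ s).smul_const v).const_add p).add
      (((hasDerivAt_id s).sub (hΦ s)).smul_const w)
    exact this.deriv
  have hd2 : deriv (deriv x) = fun s => (-(2 * k * (k * s)) / (1 + (k * s) ^ 2) ^ 2) • (v - w) := by
    rw [hd]
    funext s
    have := ((hφ s).smul_const v).add (((hφ s).const_sub 1).smul_const w)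
    rw [smul_sub, sub_eq_add_neg, ← neg_smul]
    exact this.deriv
  refine ⟨x, ⟨?_, ?_, ?_⟩, ?_, ?_, rfl⟩
  · have : ContDiff ℝ 2 (fun s : ℝ => Real.arctan (k * s)) :=
      Real.contDiff_arctan.comp (contDiff_const.mul contDiff_id)
    simp only [hx]
    fun_prop
  · intro s
    rw [hd]
    have hp : 0 < 1 + (k * s) ^ 2 := by positivity
    have h0 : 0 ≤ 1 / (1 + (k * s) ^ 2) := by positivity
    have h1 : 0 ≤ 1 - 1 / (1 + (k * s) ^ 2) := by
      rw [sub_nonneg, div_le_one hp]; nlinarith [sq_nonneg (k * s)]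
    calc _ ≤ (1 / (1 + (k * s) ^ 2)) * ‖v‖ + (1 - 1 / (1 + (k * s) ^ 2)) * ‖w‖ := by
          refine (norm_add_le _ _).trans ?_
          rw [norm_smul, norm_smul, Real.norm_of_nonneg h0, Real.norm_of_nonneg h1]
      _ ≤ (1 / (1 + (k * s) ^ 2)) * vmax + (1 - 1 / (1 + (k * s) ^ 2)) * vmax := by gcongr
      _ = vmax := by ring
  · intro s
    rw [hd2]
    have hp : 0 < 1 + (k * s) ^ 2 := by positivity
    have h1 : |-(2 * k * (k * s)) / (1 + (k * s) ^ 2) ^ 2| ≤ k := by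
      rw [abs_div, abs_neg, abs_of_pos (by positivity : 0 < (1 + (k * s) ^ 2) ^ 2),
        div_le_iff₀ (by positivity), mul_assoc, mul_left_comm, abs_mul, abs_of_pos hk0]
      apply mul_le_mul_of_nonneg_left _ hk0.le
      rw [abs_le]
      constructor <;> nlinarith [sq_nonneg (k * s - 1), sq_nonneg (k * s + 1), sq_nonneg (k * s), sq_nonneg ((k*s)^2)]
    have h2 : ‖v - w‖ ≤ 2 * vmax := (norm_sub_le _ _).trans (by linarith)
    calc _ ≤ k * (2 * vmax) := by
          rw [norm_smul, Real.norm_eq_abs]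
          gcongr
      _ = umax := by rw [hk]; field_simp
  · simp [hx]
  · rw [hd]; simp

/-- The reachable set at time `T` contains a ball. -/
theorem endDI_closedBall (vmax umax : ℝ) (hvmax : 0 < vmax) (humax : 0 < umax)
    (p v : Plane) (hv : ‖v‖ ≤ vmax) (T k : ℝ) (hT : 0 < T)
    (hk : k = umax / (2 * vmax)) :
    Metric.closedBall (p + (Real.arctan (k * T) / k) • v)
      ((T - Real.arctan (k * T) / k) * vmax) ⊆ endDI vmax umax p v T := by
  have hk0 : 0 < k := by rw [hk]; positivity
  have hr : 0 < T - Real.arctan (k * T) / k := by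
    rw [sub_pos, div_lt_iff₀ hk0, mul_comm T]
    exact arctan_lt_self_aux (by positivity)
  intro q hq
  rw [mem_closedBall_iff_norm] at hq
  set r := T - Real.arctan (k * T) / k with hrd
  have := endDI_blend vmax umax hvmax humax p v
    (r⁻¹ • (q - (p + (Real.arctan (k * T) / k) • v))) hv (by
      rw [norm_smul, Real.norm_of_nonneg (by positivity), inv_mul_le_iff₀ hr]; exact hq) T k hk
  rw [← hrd, smul_smul, mul_inv_cancel₀ hr.ne', one_smul, add_sub_cancel] at this
  exact this

theorem endDI_interior (vmax umax : ℝ) (hvmax : 0 < vmax) (humax : 0 < umax)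
    (p v : Plane) (hv : ‖v‖ ≤ vmax) (T : ℝ) (hT : 0 < T) :
    (interior (endDI vmax umax p v T)).Nonempty := by
  have hk0 : 0 < umax / (2 * vmax) := by positivity
  refine ⟨_, interior_mono (endDI_closedBall vmax umax hvmax humax p v hv T _ hT rfl)
    (Metric.ball_subset_interior_closedBall (Metric.mem_ball_self ?_))⟩
  refine mul_pos ?_ hvmax
  rw [sub_pos, div_lt_iff₀ hk0, mul_comm T]
  exact arctan_lt_self_aux (by positivity)

/-- Every point is reachable. -/
theorem endDI_exists (vmax umax : ℝ) (hvmax : 0 < vmax) (humax : 0 < umax)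
    (p v q : Plane) (hv : ‖v‖ ≤ vmax) : ∃ T, 0 < T ∧ q ∈ endDI vmax umax p v T := by
  set k := umax / (2 * vmax) with hk
  have hk0 : 0 < k := by positivity
  set T := 1 + 4 / k + ‖q - p‖ / vmax with hT
  have hT0 : 0 < T := by positivity
  refine ⟨T, hT0, endDI_closedBall vmax umax hvmax humax p v hv T k hT0 hk ?_⟩
  have ha : Real.arctan (k * T) / k ≤ 2 / k := by
    gcongr
    linarith [Real.arctan_lt_pi_div_two (k * T), Real.pi_le_four]
  have ha0 : 0 ≤ Real.arctan (k * T) / k :=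
    div_nonneg (Real.arctan_nonneg.2 (by positivity)) hk0.le
  rw [mem_closedBall_iff_norm]
  calc ‖q - (p + (Real.arctan (k * T) / k) • v)‖
      = ‖(q - p) - (Real.arctan (k * T) / k) • v‖ := by rw [sub_sub]
    _ ≤ ‖q - p‖ + 2 / k * vmax := by
        refine (norm_sub_le _ _).trans ?_
        rw [norm_smul, Real.norm_of_nonneg ha0]
        gcongr
    _ ≤ (1 + 2 / k + ‖q - p‖ / vmax) * vmax := by
        have : ‖q - p‖ / vmax * vmax = ‖q - p‖ := by field_simp
        nlinarith
    _ ≤ (T - Real.arctan (k * T) / k) * vmax := by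
        apply mul_le_mul_of_nonneg_right _ hvmax.le
        rw [hT] at *
        have : 4 / k = 2 / k + 2 / k := by ring
        linarith

theorem tauDI_lt_iff (vmax umax : ℝ) (hvmax : 0 < vmax) (humax : 0 < umax)
    (p v q : Plane) (hv : ‖v‖ ≤ vmax) (s : ℝ) :
    tauDI vmax umax p v q < s ↔ ∃ T, 0 ≤ T ∧ T < s ∧ q ∈ endDI vmax umax p v T := by
  unfold tauDI
  rw [csInf_lt_iff]
  · constructor
    · rintro ⟨T, ⟨h0, h1⟩, h2⟩; exact ⟨T, h0, h2, h1⟩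
    · rintro ⟨T, h0, h2, h1⟩; exact ⟨T, ⟨h0, h1⟩, h2⟩
  · exact ⟨0, fun T hT => hT.1⟩
  · obtain ⟨T, h0, h1⟩ := endDI_exists vmax umax hvmax humax p v q hv
    exact ⟨T, h0.le, h1⟩

theorem tauDI_nonneg (vmax umax : ℝ) (p v q : Plane) : 0 ≤ tauDI vmax umax p v q :=
  Real.sInf_nonneg fun _ hT => hT.1

theorem tauDI_le (vmax umax : ℝ) (p v q : Plane) (T : ℝ) (hT : 0 ≤ T)
    (hq : q ∈ endDI vmax umax p v T) : tauDI vmax umax p v q ≤ T :=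
  csInf_le ⟨0, fun _ hT => hT.1⟩ ⟨hT, hq⟩

theorem tauDI_aemeasurable (vmax umax : ℝ) (hvmax : 0 < vmax) (humax : 0 < umax)
    (p v : Plane) (hv : ‖v‖ ≤ vmax) :
    AEMeasurable (tauDI vmax umax p v) (volume : Measure Plane) := by
  apply NullMeasurable.aemeasurable
  have key : ∀ s : ℝ, NullMeasurableSet (tauDI vmax umax p v ⁻¹' Set.Iio s)
      (volume : Measure Plane) := by
    intro s
    have hU := nullMeasurable_iUnion_convex
      (fun T : {T : ℝ // 0 < T ∧ T < s} => endDI vmax umax p v T)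
      (fun T => endDI_convex _ _ _ _ _)
      (fun T => endDI_interior vmax umax hvmax humax p v hv _ T.2.1)
    refine hU.congr ?_
    have hp : ∀ᵐ q ∂(volume : Measure Plane), q ≠ p := Measure.ae_ne volume p
    filter_upwards [hp] with q hq
    apply propext
    change q ∈ (⋃ T : {T : ℝ // 0 < T ∧ T < s}, endDI vmax umax p v T) ↔ tauDI vmax umax p v q < s
    rw [tauDI_lt_iff vmax umax hvmax humax p v q hv, Set.mem_iUnion]
    constructor
    · rintro ⟨⟨T, h0, h1⟩, h2⟩; exact ⟨T, h0.le, h1, h2⟩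
    · rintro ⟨T, h0, h1, h2⟩
      rcases h0.eq_or_lt with rfl | h0
      · obtain ⟨x, _, hx0, _, hx⟩ := h2
        exact absurd (hx.symm.trans hx0) hq
      · exact ⟨⟨T, h0, h1⟩, h2⟩
  have hm : @Measurable (NullMeasurableSpace Plane volume) ℝ _ _ (tauDI vmax umax p v) :=
    measurable_of_Iio (α := ℝ) (δ := NullMeasurableSpace Plane volume) key
  exact hm

theorem drift_bound (vmax umax : ℝ) (humax : 0 < umax) (p v q : Plane) (T : ℝ) (hT : 0 ≤ T)
    (hq : q ∈ endDI vmax umax p v T) : ‖q - p - T • v‖ ≤ umax * T ^ 2 := by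
  obtain ⟨x, ⟨hx, _, hx2⟩, rfl, rfl, rfl⟩ := hq
  have hdx : Differentiable ℝ x := hx.differentiable (by norm_num)
  have hdx' : Differentiable ℝ (deriv x) :=
    ((contDiff_succ_iff_deriv (n := 1)).1 hx).2.2.differentiable (by norm_num)
  have h1 : ∀ s ∈ Set.Icc 0 T, ‖deriv x s - deriv x 0‖ ≤ umax * (s - 0) :=
    norm_image_sub_le_of_norm_deriv_le_segment'
      (fun s _ => (hdx' s).hasDerivAt.hasDerivWithinAt) (fun s _ => hx2 s)
  have h2 : ∀ s ∈ Set.Icc 0 T,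
      ‖(x s - s • deriv x 0) - (x 0 - (0:ℝ) • deriv x 0)‖ ≤ umax * T * (s - 0) := by
    refine norm_image_sub_le_of_norm_deriv_le_segment' (f := fun s => x s - s • deriv x 0)
      (f' := fun s => deriv x s - (1:ℝ) • deriv x 0)
      (fun s _ => ((hdx s).hasDerivAt.sub
        ((hasDerivAt_id s).smul_const (deriv x 0))).hasDerivWithinAt) ?_
    intro s hs
    rw [one_smul]
    refine (h1 s ⟨hs.1, hs.2.le⟩).trans ?_
    rw [sub_zero]
    exact mul_le_mul_of_nonneg_left hs.2.le humax.le
  have h3 := h2 T ⟨hT, le_rfl⟩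
  rw [zero_smul, sub_zero, sub_zero] at h3
  calc ‖x T - x 0 - T • deriv x 0‖ = ‖x T - T • deriv x 0 - x 0‖ := by rw [sub_right_comm]
    _ ≤ umax * T * T := h3
    _ = umax * T ^ 2 := by ring

theorem norm_comb (b : OrthonormalBasis (Fin 2) ℝ Plane) (a c : ℝ) :
    ‖a • b 0 + c • b 1‖ ^ 2 = a ^ 2 + c ^ 2 := by
  have h01 : inner ℝ (b 0) (b 1) = (0:ℝ) := b.orthonormal.2 (by decide)
  rw [norm_add_sq_real, norm_smul, norm_smul, b.orthonormal.1, b.orthonormal.1,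
    inner_smul_left, inner_smul_right, h01]
  simp

theorem norm_comb_le (b : OrthonormalBasis (Fin 2) ℝ Plane) (a c m : ℝ) (hm : 0 ≤ m)
    (h : a ^ 2 + c ^ 2 ≤ m ^ 2) : ‖a • b 0 + c • b 1‖ ≤ m := by
  apply le_of_sq_le_sq _ hm
  rw [norm_comb]; exact h

/-- Constant speed circular motion. -/
theorem endDI_circle (vmax umax v₀ : ℝ)
    (p : Plane) (h0 : 0 < v₀) (hle : v₀ ≤ vmax) (b : OrthonormalBasis (Fin 2) ℝ Plane)
    (ω T : ℝ) (hω : ω ≠ 0) (hωu : v₀ * |ω| ≤ umax) :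
    p + ((v₀ / ω * Real.sin (ω * T)) • b 0 + (v₀ / ω * (1 - Real.cos (ω * T))) • b 1)
      ∈ endDI vmax umax p (v₀ • b 0) T := by
  set x : ℝ → Plane := fun s =>
    p + ((v₀ / ω * Real.sin (ω * s)) • b 0 + (v₀ / ω * (1 - Real.cos (ω * s))) • b 1) with hx
  have hlin : ∀ s, HasDerivAt (fun s => ω * s) ω s := fun s => by
    simpa using (hasDerivAt_id s).const_mul ω
  have hd : deriv x = fun s => (v₀ * Real.cos (ω * s)) • b 0 + (v₀ * Real.sin (ω * s)) • b 1 := by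
    funext s
    have := (((((hlin s).sin).const_mul (v₀ / ω)).smul_const (b 0)).add
      (((((hlin s).cos).const_sub 1).const_mul (v₀ / ω)).smul_const (b 1))).const_add p
    refine Eq.trans this.deriv ?_
    congr 2 <;> field_simp
  have hd2 : deriv (deriv x) = fun s =>
      (v₀ * (-Real.sin (ω * s) * ω)) • b 0 + (v₀ * (Real.cos (ω * s) * ω)) • b 1 := by
    rw [hd]
    funext s
    exact ((((hlin s).cos).const_mul v₀).smul_const (b 0)).add
      ((((hlin s).sin).const_mul v₀).smul_const (b 1)) |>.deriv
  refine ⟨x, ⟨?_, ?_, ?_⟩, ?_, ?_, rfl⟩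
  · simp only [hx]
    fun_prop
  · intro s
    rw [hd]
    refine (norm_comb_le b _ _ v₀ h0.le (le_of_eq ?_)).trans hle
    linear_combination v₀ ^ 2 * Real.sin_sq_add_cos_sq (ω * s)
  · intro s
    rw [hd2]
    refine (norm_comb_le b _ _ (v₀ * |ω|) (by positivity) (le_of_eq ?_)).trans hωu
    rw [mul_pow v₀ |ω|, sq_abs]
    linear_combination v₀ ^ 2 * ω ^ 2 * Real.sin_sq_add_cos_sq (ω * s)
  · simp [hx]
  · rw [hd]; simp

theorem endDI_line (vmax umax : ℝ) (humax : 0 < umax)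
    (p v : Plane) (hv : ‖v‖ ≤ vmax) (T : ℝ) : p + T • v ∈ endDI vmax umax p v T := by
  have hd : deriv (fun s : ℝ => p + s • v) = fun _ => v := by
    funext s
    have := ((hasDerivAt_id s).smul_const v).const_add p
    rw [one_smul] at this
    exact this.deriv
  refine ⟨fun s => p + s • v, ⟨by fun_prop, ?_, ?_⟩, ?_, ?_, rfl⟩
  · intro s; rw [hd]; exact hv
  · intro s; rw [hd]; simpa using humax.le
  · simp
  · rw [hd]

theorem arctan_div_le {z : ℝ} (hz : z ≠ 0) : Real.arctan z / z ≤ 1 := by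
  rcases lt_or_gt_of_ne hz with h | h
  · have := arctan_lt_self_aux (neg_pos.2 h)
    rw [Real.arctan_neg] at this
    rw [div_le_one_of_neg h]; linarith
  · rw [div_le_one h]; exact (arctan_lt_self_aux h).le

theorem arctan_div_nonneg {z : ℝ} (hz : z ≠ 0) : 0 ≤ Real.arctan z / z := by
  rcases lt_or_gt_of_ne hz with h | h
  · have := Real.arctan_pos.2 (neg_pos.2 h)
    rw [Real.arctan_neg] at this
    exact div_nonneg_of_nonpos (by linarith) h.le
  · exact div_nonneg (Real.arctan_pos.2 h).le h.le

/-- Upper bound on the travel time near the forward direction. -/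
theorem tauDI_le_coord (vmax umax v₀ : ℝ) (humax : 0 < umax)
    (p : Plane) (h0 : 0 < v₀) (hle : v₀ ≤ vmax) (b : OrthonormalBasis (Fin 2) ℝ Plane)
    (x y : ℝ) (hx : 0 < x) (hy : 2 * v₀ ^ 2 * |y| ≤ umax * x ^ 2) :
    tauDI vmax umax p (v₀ • b 0) (p + (x • b 0 + y • b 1)) ≤ (x ^ 2 + y ^ 2) / (v₀ * x) := by
  by_cases hy0 : y = 0
  · subst hy0
    have hv : ‖v₀ • b 0‖ ≤ vmax := by
      rw [norm_smul, b.orthonormal.1, Real.norm_of_nonneg h0.le, mul_one]; exact hle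
    have h := endDI_line vmax umax humax p (v₀ • b 0) hv (x / v₀)
    rw [smul_smul, div_mul_cancel₀ _ h0.ne'] at h
    rw [zero_smul, add_zero]
    refine (tauDI_le _ _ _ _ _ _ (by positivity) h).trans (le_of_eq ?_)
    field_simp
    ring
  · have hd : 0 < x ^ 2 + y ^ 2 := by positivity
    have hz : y / x ≠ 0 := div_ne_zero hy0 hx.ne'
    set α := Real.arctan (y / x) with hα
    set ω := 2 * v₀ * y / (x ^ 2 + y ^ 2) with hωd
    set T := (x ^ 2 + y ^ 2) / (v₀ * x) * (α / (y / x)) with hT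
    have hω : ω ≠ 0 := by positivity
    have hωu : v₀ * |ω| ≤ umax := by
      rw [hωd, abs_div, abs_of_pos hd, abs_mul, abs_of_pos (by positivity : 0 < 2 * v₀),
        ← mul_div_assoc, div_le_iff₀ hd]
      nlinarith [sq_nonneg y, mul_nonneg humax.le (sq_nonneg y)]
    have hωT : ω * T = 2 * α := by rw [hωd, hT]; field_simp
    have hcos : Real.cos α ^ 2 = x ^ 2 / (x ^ 2 + y ^ 2) := by
      rw [hα, Real.cos_sq_arctan]; field_simp
    have hsc : Real.sin α * Real.cos α = x * y / (x ^ 2 + y ^ 2) := by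
      have ht : Real.tan α = y / x := Real.tan_arctan _
      have hc : Real.cos α ≠ 0 := (Real.cos_arctan_pos _).ne'
      rw [Real.tan_eq_sin_div_cos] at ht
      have : Real.sin α = y / x * Real.cos α := by rw [← ht]; field_simp
      rw [this, mul_assoc, ← sq, hcos]; field_simp
    have h := endDI_circle vmax umax v₀ p h0 hle b ω T hω hωu
    have e1 : v₀ / ω * Real.sin (ω * T) = x := by
      rw [hωT, Real.sin_two_mul, mul_assoc, hsc, hωd]; field_simp
    have e2 : v₀ / ω * (1 - Real.cos (ω * T)) = y := by
      rw [hωT, Real.cos_two_mul, hcos, hωd]; field_simp; ring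
    rw [e1, e2] at h
    have hq0 : 0 ≤ (x ^ 2 + y ^ 2) / (v₀ * x) := by positivity
    refine (tauDI_le _ _ _ _ _ _ (mul_nonneg hq0 (arctan_div_nonneg hz)) h).trans ?_
    exact mul_le_of_le_one_right hq0 (arctan_div_le hz)

/-- Coordinates in an orthonormal frame centred at `p`. -/
def coordDI (b : OrthonormalBasis (Fin 2) ℝ Plane) (p q : Plane) : Fin 2 → ℝ :=
  WithLp.ofLp (b.repr (q - p))

theorem coordDI_mp (b : OrthonormalBasis (Fin 2) ℝ Plane) (p : Plane) :
    MeasurePreserving (coordDI b p) volume volume :=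
  (PiLp.volume_preserving_ofLp (Fin 2)).comp
    (b.measurePreserving_repr.comp (measurePreserving_sub_right volume p))

theorem coordDI_eq (b : OrthonormalBasis (Fin 2) ℝ Plane) (p q : Plane) :
    q = p + (coordDI b p q 0 • b 0 + coordDI b p q 1 • b 1) := by
  have := b.sum_repr (q - p)
  rw [Fin.sum_univ_two] at this
  change q = p + (b.repr (q - p) 0 • b 0 + b.repr (q - p) 1 • b 1)
  rw [this, add_sub_cancel]

/-- A coordinate box. -/
def boxDI (b : OrthonormalBasis (Fin 2) ℝ Plane) (p : Plane) (x₀ x₁ h : ℝ) : Set Plane :=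
  coordDI b p ⁻¹' Set.Icc ![x₀, -h] ![x₁, h]

theorem mem_boxDI (b : OrthonormalBasis (Fin 2) ℝ Plane) (p : Plane) (x₀ x₁ h : ℝ) (q : Plane) :
    q ∈ boxDI b p x₀ x₁ h ↔
      (x₀ ≤ coordDI b p q 0 ∧ coordDI b p q 0 ≤ x₁) ∧ |coordDI b p q 1| ≤ h := by
  simp only [boxDI, Set.mem_preimage, Set.mem_Icc, Pi.le_def, Fin.forall_fin_two, abs_le]
  simp
  tauto

theorem boxDI_meas (b : OrthonormalBasis (Fin 2) ℝ Plane) (p : Plane) (x₀ x₁ h : ℝ) :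
    MeasurableSet (boxDI b p x₀ x₁ h) :=
  (coordDI_mp b p).measurable measurableSet_Icc

theorem boxDI_volume (b : OrthonormalBasis (Fin 2) ℝ Plane) (p : Plane) (x₀ x₁ h : ℝ) :
    volume (boxDI b p x₀ x₁ h) = ENNReal.ofReal (x₁ - x₀) * ENNReal.ofReal (2 * h) := by
  rw [boxDI, (coordDI_mp b p).measure_preimage measurableSet_Icc.nullMeasurableSet,
    Real.volume_Icc_pi, Fin.prod_univ_two]
  change ENNReal.ofReal (x₁ - x₀) * ENNReal.ofReal (h - -h) = _
  rw [sub_neg_eq_add, two_mul]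

theorem boxDI_real (b : OrthonormalBasis (Fin 2) ℝ Plane) (p : Plane) (x₀ x₁ h : ℝ)
    (hx : x₀ ≤ x₁) (hh : 0 ≤ h) :
    volume.real (boxDI b p x₀ x₁ h) = (x₁ - x₀) * (2 * h) := by
  rw [Measure.real, boxDI_volume, ENNReal.toReal_mul, ENNReal.toReal_ofReal (by linarith),
    ENNReal.toReal_ofReal (by linarith)]

theorem boxDI_fin (b : OrthonormalBasis (Fin 2) ℝ Plane) (p : Plane) (x₀ x₁ h : ℝ) :
    volume (boxDI b p x₀ x₁ h) ≠ ⊤ := by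
  rw [boxDI_volume]; exact ENNReal.mul_ne_top ENNReal.ofReal_ne_top ENNReal.ofReal_ne_top

theorem exists_frame (v : Plane) (v₀ : ℝ) (hv₀ : ‖v‖ = v₀) (h0 : 0 < v₀) :
    ∃ b : OrthonormalBasis (Fin 2) ℝ Plane, v = v₀ • b 0 := by
  have ho : Orthonormal ℝ (Set.domRestrict ({0} : Set (Fin 2)) (fun _ => v₀⁻¹ • v)) := by
    constructor
    · intro i
      simp only [Set.domRestrict]
      rw [norm_smul, hv₀, Real.norm_of_nonneg (by positivity), inv_mul_cancel₀ h0.ne']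
    · intro i j hij
      exact absurd (Subsingleton.elim i j) hij
  obtain ⟨b, hb⟩ := ho.exists_orthonormalBasis_extension_of_card_eq (by simp)
  refine ⟨b, ?_⟩
  rw [hb 0 rfl, smul_smul, mul_inv_cancel₀ h0.ne', one_smul]

/-- Coordinate form of the drift bound. -/
theorem coord_drift (vmax umax v₀ : ℝ) (humax : 0 < umax)
    (b : OrthonormalBasis (Fin 2) ℝ Plane) (p q : Plane) (T : ℝ) (hT : 0 ≤ T)
    (hq : q ∈ endDI vmax umax p (v₀ • b 0) T) :
    |coordDI b p q 0 - T * v₀| ≤ umax * T ^ 2 ∧ |coordDI b p q 1| ≤ umax * T ^ 2 := by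
  have h := drift_bound vmax umax humax p _ q T hT hq
  have e : q - p - T • v₀ • b 0 =
      (coordDI b p q 0 - T * v₀) • b 0 + (coordDI b p q 1) • b 1 := by
    nth_rewrite 1 [coordDI_eq b p q]
    rw [smul_smul, sub_smul, add_sub_cancel_left]
    abel
  have h2 : ‖q - p - T • v₀ • b 0‖ ^ 2 ≤ (umax * T ^ 2) ^ 2 := by gcongr
  rw [e, norm_comb] at h2
  constructor <;> apply abs_le_of_sq_le_sq _ (by positivity) <;>
    nlinarith [sq_nonneg (coordDI b p q 0 - T * v₀), sq_nonneg (coordDI b p q 1)]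

theorem reachDI_subset (vmax umax v₀ : ℝ) (hvmax : 0 < vmax) (humax : 0 < umax)
    (b : OrthonormalBasis (Fin 2) ℝ Plane) (p : Plane) (h0 : 0 < v₀)
    (hv : ‖v₀ • b 0‖ ≤ vmax) (t : ℝ) (ht : 0 < t) :
    reachDI vmax umax p (v₀ • b 0) t ⊆
      boxDI b p (-(4 * umax * t ^ 2)) (2 * t * v₀ + 4 * umax * t ^ 2) (4 * umax * t ^ 2) := by
  intro q hq
  have hlt : tauDI vmax umax p (v₀ • b 0) q < 2 * t := lt_of_le_of_lt hq (by linarith)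
  obtain ⟨T, hT0, hT, hqT⟩ := (tauDI_lt_iff vmax umax hvmax humax p _ q hv _).1 hlt
  obtain ⟨h1, h2⟩ := coord_drift vmax umax v₀ humax b p q T hT0 hqT
  have hb : umax * T ^ 2 ≤ 4 * umax * t ^ 2 := by
    have : T ^ 2 ≤ (2 * t) ^ 2 := by gcongr
    nlinarith
  rw [abs_le] at h1
  have hTv : T * v₀ ≤ 2 * t * v₀ := by gcongr
  have hTv0 : 0 ≤ T * v₀ := by positivity
  rw [mem_boxDI]
  exact ⟨⟨by linarith, by linarith⟩, h2.trans hb⟩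

theorem reachDI_integral_upper (vmax umax v₀ : ℝ) (hvmax : 0 < vmax) (humax : 0 < umax)
    (b : OrthonormalBasis (Fin 2) ℝ Plane) (p : Plane) (h0 : 0 < v₀)
    (hv : ‖v₀ • b 0‖ ≤ vmax) (t : ℝ) (ht : 0 < t) (ht1 : t ≤ 1) :
    (∫ q in reachDI vmax umax p (v₀ • b 0) t, tauDI vmax umax p (v₀ • b 0) q) / t ^ 4
      ≤ (2 * v₀ + 8 * umax) * (8 * umax) := by
  have hsub := reachDI_subset vmax umax v₀ hvmax humax b p h0 hv t ht
  have hfin := boxDI_fin b p (-(4 * umax * t ^ 2)) (2 * t * v₀ + 4 * umax * t ^ 2)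
    (4 * umax * t ^ 2)
  have h1 := norm_setIntegral_le_of_norm_le_const (μ := (volume : Measure Plane))
    (f := tauDI vmax umax p (v₀ • b 0)) (C := t)
    (s := reachDI vmax umax p (v₀ • b 0) t) (lt_of_le_of_lt (measure_mono hsub) hfin.lt_top)
    (fun q hq => by rw [Real.norm_of_nonneg (tauDI_nonneg _ _ _ _ _)]; exact hq)
  have h2 := measureReal_mono (μ := (volume : Measure Plane)) hsub hfin
  rw [boxDI_real _ _ _ _ _ (by nlinarith [mul_pos ht h0, mul_pos humax (pow_pos ht 2)])
    (by positivity)] at h2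
  rw [div_le_iff₀ (by positivity)]
  calc _ ≤ _ := le_norm_self _
    _ ≤ _ := h1
    _ ≤ t * _ := mul_le_mul_of_nonneg_left h2 ht.le
    _ = (2 * v₀ + 8 * umax * t) * (8 * umax) * t ^ 4 := by ring
    _ ≤ (2 * v₀ + 8 * umax) * (8 * umax) * t ^ 4 := by
        have : 8 * umax * t ≤ 8 * umax := by nlinarith
        gcongr

theorem reachDI_integral_lower (vmax umax v₀ : ℝ) (hvmax : 0 < vmax) (humax : 0 < umax)
    (b : OrthonormalBasis (Fin 2) ℝ Plane) (p : Plane) (h0 : 0 < v₀) (hle : v₀ ≤ vmax)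
    (hv : ‖v₀ • b 0‖ ≤ vmax) (t : ℝ) (ht : 0 < t) (hts : 100 * (umax * t) ≤ v₀) :
    v₀ * umax / 12 ≤
    (∫ q in reachDI vmax umax p (v₀ • b 0) t, tauDI vmax umax p (v₀ • b 0) q) / t ^ 4 := by
  set ξ := 19 / 20 * (v₀ * t) with hξ
  have hξ0 : 0 < ξ := by positivity
  set h := 9 / 32 * (19 / 20) ^ 2 * (umax * t ^ 2) with hh
  have hh0 : 0 < h := by positivity
  set S := boxDI b p (3 / 4 * ξ) ξ h with hS
  set τ := tauDI vmax umax p (v₀ • b 0) with hτ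
  set m := 3 / 4 * ξ / (v₀ + umax * t) with hm
  have hden : 0 < v₀ + umax * t := by positivity
  have hSR : S ⊆ reachDI vmax umax p (v₀ • b 0) t := by
    intro q hq
    rw [hS, mem_boxDI] at hq
    obtain ⟨⟨hx1, hx2⟩, hy⟩ := hq
    have hq := coordDI_eq b p q
    set x := coordDI b p q 0 with hx
    set y := coordDI b p q 1
    have hx0 : 0 < x := by linarith
    change tauDI vmax umax p (v₀ • b 0) q ≤ t
    rw [hq]
    refine (tauDI_le_coord vmax umax v₀ humax p h0 hle b x y hx0 ?_).trans ?_
    · have hxx : (3 / 4 * ξ) ^ 2 ≤ x ^ 2 := by gcongr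
      calc 2 * v₀ ^ 2 * |y| ≤ 2 * v₀ ^ 2 * h := by gcongr
        _ = umax * (3 / 4 * ξ) ^ 2 := by rw [hh, hξ]; ring
        _ ≤ umax * x ^ 2 := by gcongr
    · rw [div_le_iff₀ (by positivity)]
      have hh1 : h ≤ v₀ * t / 100 := by
        have : umax * t ^ 2 * 100 ≤ v₀ * t := by nlinarith
        rw [hh]; nlinarith [mul_pos humax (pow_pos ht 2)]
      have hy2 : y ^ 2 ≤ (v₀ * t / 100) ^ 2 := by
        rw [← sq_abs y]; gcongr; exact hy.trans hh1
      have hvt : 0 < v₀ * t := by positivity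
      nlinarith [mul_nonneg hx0.le (sub_nonneg.2 hx2)]
  have hmS : ∀ q ∈ S, m ≤ τ q := by
    intro q hq
    rw [hS, mem_boxDI] at hq
    by_contra hlt
    push Not at hlt
    obtain ⟨T, hT0, hT, hqT⟩ := (tauDI_lt_iff vmax umax hvmax humax p _ q hv _).1 hlt
    obtain ⟨h1, -⟩ := coord_drift vmax umax v₀ humax b p q T hT0 hqT
    rw [abs_le] at h1
    have hmt : m ≤ t := by
      rw [hm, div_le_iff₀ hden, hξ]
      nlinarith [mul_pos h0 ht, mul_pos ht (mul_pos humax ht)]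
    have hTt : T ≤ t := hT.le.trans hmt
    have h2 : T * (v₀ + umax * t) < 3 / 4 * ξ := by
      rwa [hm, lt_div_iff₀ hden] at hT
    have h3 : umax * T ^ 2 ≤ T * (umax * t) := by
      have := mul_le_mul_of_nonneg_left hTt (mul_nonneg humax.le hT0)
      nlinarith
    nlinarith [hq.1.1]
  have hsub := reachDI_subset vmax umax v₀ hvmax humax b p h0 hv t ht
  have hfin := boxDI_fin b p (-(4 * umax * t ^ 2)) (2 * t * v₀ + 4 * umax * t ^ 2)
    (4 * umax * t ^ 2)
  have hRfin : volume (reachDI vmax umax p (v₀ • b 0) t) < ⊤ :=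
    lt_of_le_of_lt (measure_mono hsub) hfin.lt_top
  have hmeas := tauDI_aemeasurable vmax umax hvmax humax p (v₀ • b 0) hv
  have hRm : NullMeasurableSet (reachDI vmax umax p (v₀ • b 0) t) volume :=
    hmeas.nullMeasurable measurableSet_Iic
  have hint : IntegrableOn τ (reachDI vmax umax p (v₀ • b 0) t) volume := by
    refine ⟨hmeas.aestronglyMeasurable.restrict, ?_⟩
    refine HasFiniteIntegral.restrict_of_bounded (C := t) hRfin ?_
    rw [ae_restrict_iff'₀ hRm]
    refine Filter.Eventually.of_forall fun q hq => ?_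
    rw [Real.norm_of_nonneg (tauDI_nonneg _ _ _ _ _)]
    exact hq
  have h1 : ∫ q in S, τ q ≤ ∫ q in reachDI vmax umax p (v₀ • b 0) t, τ q :=
    setIntegral_mono_set hint (Filter.Eventually.of_forall fun q => tauDI_nonneg _ _ _ _ _)
      hSR.eventuallyLE
  have h2 : m * volume.real S ≤ ∫ q in S, τ q :=
    setIntegral_ge_of_const_le_real (boxDI_meas _ _ _ _ _) (boxDI_fin _ _ _ _ _) hmS
      (hint.mono_set hSR)
  rw [hS, boxDI_real _ _ _ _ _ (by linarith) hh0.le] at h2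
  rw [le_div_iff₀ (by positivity)]
  refine le_trans ?_ (h2.trans h1)
  rw [hm, hξ, hh, div_mul_eq_mul_div (3 / 4 * (19 / 20 * (v₀ * t))), le_div_iff₀ hden]
  have key : v₀ + umax * t ≤ 101 / 100 * v₀ := by linarith
  calc v₀ * umax / 12 * t ^ 4 * (v₀ + umax * t)
      ≤ v₀ * umax / 12 * t ^ 4 * (101 / 100 * v₀) := by gcongr
    _ = 101 / 1200 * (v₀ ^ 2 * umax * t ^ 4) := by ring
    _ ≤ 27 / 256 * (19 / 20) ^ 4 * (v₀ ^ 2 * umax * t ^ 4) := by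
        apply mul_le_mul_of_nonneg_right _ (by positivity)
        norm_num
    _ = _ := by ring

/-- small-time lower bound on the integral of the travel time over the
reachable set of a DI robot with nonzero initial speed:
`liminf_{t→0⁺} (∫_{R_t(g)} τ_DI(g,q) dq) / t⁴ ≥ v₀ u_max / 12`. -/
theorem di_travel_time_integral_lower_bound
    (vmax umax v₀ : ℝ) (hvmax : 0 < vmax) (humax : 0 < umax)
    (p v : Plane) (hv₀ : ‖v‖ = v₀) (h0 : 0 < v₀) (hle : v₀ ≤ vmax) :
    v₀ * umax / 12 ≤
      Filter.liminf
        (fun t : ℝ =>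
          (∫ q in reachDI vmax umax p v t, tauDI vmax umax p v q) / t ^ 4)
        (𝓝[>] 0) := by
  obtain ⟨b, rfl⟩ := exists_frame v v₀ hv₀ h0
  have hv : ‖v₀ • b 0‖ ≤ vmax := hv₀.trans_le hle
  have hδ : 0 < min 1 (v₀ / (100 * umax)) := by positivity
  have hsmall : ∀ᶠ t in 𝓝[>] (0:ℝ), t ∈ Set.Ioc 0 (min 1 (v₀ / (100 * umax))) :=
    Ioc_mem_nhdsGT hδ
  refine le_liminf_of_le ?_ ?_
  · refine Filter.IsBoundedUnder.isCoboundedUnder_ge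
      ⟨(2 * v₀ + 8 * umax) * (8 * umax), Filter.eventually_map.2 ?_⟩
    filter_upwards [hsmall] with t ht
    exact reachDI_integral_upper vmax umax v₀ hvmax humax b p h0 hv t ht.1
      (ht.2.trans (min_le_left _ _))
  · filter_upwards [hsmall] with t ht
    refine reachDI_integral_lower vmax umax v₀ hvmax humax b p h0 hle hv t ht.1 ?_
    have := ht.2.trans (min_le_right _ _)
    rw [le_div_iff₀ (by positivity)] at this
    linarith
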